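/- Let h > 0, let ω > 0 be the unique positive solution of h = (x/2)·e^{x²/4}, and define U(η) = h·∫_η^ω e^{−s²/4} ds for η ∈ [0, ω]. Then (U, ω) solves the stationary problem (ODE-P): U''(η) + (η/2)·U'(η) = 0 for all η ∈ (0, ω); −U'(0) = h; U(ω) = 0; and ω/2 = −U'(ω). -/

import Mathlib

/-- Let `h > 0`, let `ω > 0` be the unique positive solution of
`h = (x/2) * exp (x^2/4)`, and let `U η = h * ∫ s in η..ω, exp (-s^2/4)`.
Then `(U, ω)` solves the stationary problem (ODE-P):
`U'' + (η/2) U' = 0` on `(0, ω)`, `-U'(0) = h`, `U ω = 0`, `ω/2 = -U'(ω)`. -/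
theorem stationary_profile_solves_ODE_P
    (h ω : ℝ) (hh : 0 < h) (hω : 0 < ω)
    (hroot : h = ω / 2 * Real.exp (ω ^ 2 / 4))
    (U : ℝ → ℝ)
    (hU : ∀ η, U η = h * ∫ s in η..ω, Real.exp (-s ^ 2 / 4)) :
    (∀ η ∈ Set.Ioo 0 ω, deriv (deriv U) η + η / 2 * deriv U η = 0) ∧
    (-deriv U 0 = h) ∧ (U ω = 0) ∧ (ω / 2 = -deriv U ω) := by
  have hc : Continuous (fun s : ℝ => Real.exp (-s ^ 2 / 4)) := by fun_prop
  have hd : ∀ η, HasDerivAt U (h * -Real.exp (-η ^ 2 / 4)) η := by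
    intro η
    have hUf : U = fun η => h * ∫ s in η..ω, Real.exp (-s ^ 2 / 4) := funext hU
    rw [hUf]
    exact (intervalIntegral.integral_hasDerivAt_left (hc.intervalIntegrable _ _)
      hc.aestronglyMeasurable.stronglyMeasurableAtFilter hc.continuousAt).const_mul h
  have hd1 : deriv U = fun η => h * -Real.exp (-η ^ 2 / 4) := funext fun η => (hd η).deriv
  have hd2 : ∀ η, HasDerivAt (deriv U) (h * -(Real.exp (-η ^ 2 / 4) * (-(2 * η) / 4))) η := by
    intro η
    rw [hd1]
    have h1 : HasDerivAt (fun x : ℝ => -x ^ 2 / 4) (-(2 * η) / 4) η := by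
      simpa using ((hasDerivAt_pow 2 η).fun_neg).div_const 4
    exact (h1.exp.fun_neg).const_mul h
  refine ⟨fun η _ => ?_, ?_, ?_, ?_⟩
  · rw [(hd2 η).deriv, (hd η).deriv]; ring
  · rw [(hd 0).deriv]; simp
  · rw [hU]; simp
  · rw [(hd ω).deriv, hroot]
    have : Real.exp (ω ^ 2 / 4) * Real.exp (-ω ^ 2 / 4) = 1 := by
      rw [← Real.exp_add, ← Real.exp_zero]; congr 1; ring
    linear_combination (-(ω / 2)) * this
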